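/- Let f be a read-once monotone boolean formula whose canonical read-once tree has root a ·-node with children c₁, …, cₗ. Then for every pair of distinct children cⱼ, cⱼ' and every pair of variables x in the subtree of cⱼ and y in the subtree of cⱼ', x and y occur together in some prime implicant of f; i.e., the co-occurrence graph contains all edges between the variable sets of distinct children. -/

import Mathlib

/-- Monotone boolean formulas over variables of type `α`, built from variables
with conjunction and disjunction. -/
inductive BFormula (α : Type) : Type
  | var : α → BFormula α
  | and : BFormula α → BFormula α → BFormula α
  | or  : BFormula α → BFormula α → BFormula α

namespace BFormula

/-- Evaluation of a boolean formula under a truth assignment. -/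
def eval {α : Type} (v : α → Bool) : BFormula α → Bool
  | var x => v x
  | and f g => f.eval v && g.eval v
  | or f g => f.eval v || g.eval v

/-- The set of variables occurring in a formula. -/
def vars {α : Type} [DecidableEq α] : BFormula α → Finset α
  | var x => {x}
  | and f g => f.vars ∪ g.vars
  | or f g => f.vars ∪ g.vars

/-- The number of occurrences of the variable `x` in a formula. -/
def count {α : Type} [DecidableEq α] (x : α) : BFormula α → ℕ
  | var y => if y = x then 1 else 0
  | and f g => f.count x + g.count x
  | or f g => f.count x + g.count x

/-- `S` is an implicant of `f`: setting all the variables of `S` to true forces `f` true. -/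
def IsImplicant {α : Type} (f : BFormula α) (S : Finset α) : Prop :=
  ∀ v : α → Bool, (∀ x ∈ S, v x = true) → f.eval v = true

/-- `S` is a prime implicant of `f`: a minimal implicant. -/
def IsPrimeImplicant {α : Type} (f : BFormula α) (S : Finset α) : Prop :=
  f.IsImplicant S ∧ ∀ T ⊂ S, ¬ f.IsImplicant T

end BFormula

namespace BFormula

theorem eval_congr_vars {α : Type} [DecidableEq α] (f : BFormula α) (v w : α → Bool)
    (hvw : ∀ x ∈ f.vars, v x = w x) : f.eval v = f.eval w := by
  induction f with
  | var x => exact hvw x (by simp [vars])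
  | and g h ihg ihh =>
    simp only [eval]
    rw [ihg fun x hx => hvw x (by simp [vars, hx]), ihh fun x hx => hvw x (by simp [vars, hx])]
  | or g h ihg ihh =>
    simp only [eval]
    rw [ihg fun x hx => hvw x (by simp [vars, hx]), ihh fun x hx => hvw x (by simp [vars, hx])]

theorem eval_mono {α : Type} (f : BFormula α) (v w : α → Bool)
    (hvw : ∀ x, v x = true → w x = true) (hv : f.eval v = true) : f.eval w = true := by
  induction f with
  | var x => exact hvw x hv
  | and g h ihg ihh =>
    simp only [eval, Bool.and_eq_true] at hv ⊢
    exact ⟨ihg hv.1, ihh hv.2⟩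
  | or g h ihg ihh =>
    simp only [eval, Bool.or_eq_true] at hv ⊢
    exact hv.imp ihg ihh

theorem eval_false {α : Type} (f : BFormula α) : f.eval (fun _ => false) = false := by
  induction f with
  | var x => rfl
  | and g h ihg ihh => simp [eval, ihg]
  | or g h ihg ihh => simp [eval, ihg, ihh]

theorem isImplicant_iff {α : Type} [DecidableEq α] (f : BFormula α) (S : Finset α) :
    f.IsImplicant S ↔ f.eval (fun x => decide (x ∈ S)) = true := by
  constructor
  · intro H
    exact H _ (by simp)
  · intro H v hv
    exact eval_mono f _ v (by simpa using hv) H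

theorem not_isImplicant_empty {α : Type} (f : BFormula α) : ¬ f.IsImplicant ∅ := by
  intro H
  have h1 := H (fun _ => false) (by simp)
  rw [eval_false] at h1
  exact Bool.noConfusion h1

theorem IsImplicant.inter_vars {α : Type} [DecidableEq α] {f : BFormula α} {U : Finset α}
    (H : f.IsImplicant U) : f.IsImplicant (U ∩ f.vars) := by
  rw [isImplicant_iff] at H ⊢
  rw [← H]
  apply eval_congr_vars
  intro x hx
  simp [hx]

theorem IsPrimeImplicant.and {α : Type} [DecidableEq α] {g h : BFormula α} {S T : Finset α}
    (hd : Disjoint g.vars h.vars) (hS : g.IsPrimeImplicant S) (hT : h.IsPrimeImplicant T)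
    (hSv : S ⊆ g.vars) (hTv : T ⊆ h.vars) : (g.and h).IsPrimeImplicant (S ∪ T) := by
  refine ⟨fun v hv => ?_, fun U hU HU => ?_⟩
  · simp only [eval, Bool.and_eq_true]
    exact ⟨hS.1 v fun x hx => hv x (by simp [hx]), hT.1 v fun x hx => hv x (by simp [hx])⟩
  · rw [Finset.disjoint_left] at hd
    have hg : g.IsImplicant U := fun v hv => by
      have := HU v hv
      simp only [eval, Bool.and_eq_true] at this
      exact this.1
    have hh : h.IsImplicant U := fun v hv => by
      have := HU v hv
      simp only [eval, Bool.and_eq_true] at this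
      exact this.2
    have h1 : U ∩ g.vars = S := by
      have hsub : U ∩ g.vars ⊆ S := by
        intro x hx
        rw [Finset.mem_inter] at hx
        rcases Finset.mem_union.1 (hU.1 hx.1) with h | h
        · exact h
        · exact absurd (hTv h) (hd hx.2)
      by_contra hne
      exact hS.2 _ (lt_of_le_of_ne hsub hne) hg.inter_vars
    have h2 : U ∩ h.vars = T := by
      have hsub : U ∩ h.vars ⊆ T := by
        intro x hx
        rw [Finset.mem_inter] at hx
        rcases Finset.mem_union.1 (hU.1 hx.1) with h | h
        · exact absurd hx.2 (hd (hSv h))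
        · exact h
      by_contra hne
      exact hT.2 _ (lt_of_le_of_ne hsub hne) hh.inter_vars
    apply hU.2
    intro x hx
    rcases Finset.mem_union.1 hx with h | h
    · rw [← h1] at h
      exact (Finset.mem_inter.1 h).1
    · rw [← h2] at h
      exact (Finset.mem_inter.1 h).1

theorem or_prime_aux {α : Type} [DecidableEq α] {g h k : BFormula α} {S : Finset α}
    (hd : Disjoint g.vars h.vars) (hS : g.IsPrimeImplicant S) (hSv : S ⊆ g.vars)
    (hk : ∀ v, k.eval v = (g.eval v || h.eval v)) : k.IsPrimeImplicant S := by
  refine ⟨fun v hv => by simp [hk, hS.1 v hv], fun U hU HU => ?_⟩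
  rw [isImplicant_iff, hk, Bool.or_eq_true, ← isImplicant_iff, ← isImplicant_iff] at HU
  rcases HU with H | H
  · exact hS.2 U hU H
  · have h1 := H.inter_vars
    rw [Finset.disjoint_iff_inter_eq_empty.1
      (Finset.disjoint_of_subset_left (hU.1.trans hSv) hd)] at h1
    exact not_isImplicant_empty h h1

theorem count_pos {α : Type} [DecidableEq α] (f : BFormula α) {x : α} (hx : x ∈ f.vars) :
    1 ≤ f.count x := by
  induction f with
  | var y => simp_all [vars, count]
  | and g h ihg ihh =>
    simp only [vars, Finset.mem_union, count] at hx ⊢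
    rcases hx with hx | hx
    · have := ihg hx
      omega
    · have := ihh hx
      omega
  | or g h ihg ihh =>
    simp only [vars, Finset.mem_union, count] at hx ⊢
    rcases hx with hx | hx
    · have := ihg hx
      omega
    · have := ihh hx
      omega

theorem vars_nonempty {α : Type} [DecidableEq α] (f : BFormula α) : f.vars.Nonempty := by
  induction f with
  | var y => exact ⟨y, by simp [vars]⟩
  | and g h ihg ihh => exact ihg.mono (by simp [vars])
  | or g h ihg ihh => exact ihg.mono (by simp [vars])

theorem readOnce_split {α : Type} [DecidableEq α] (g h : BFormula α)
    (H : ∀ x ∈ g.vars ∪ h.vars, g.count x + h.count x = 1) :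
    Disjoint g.vars h.vars ∧ (∀ x ∈ g.vars, g.count x = 1) ∧ (∀ x ∈ h.vars, h.count x = 1) := by
  refine ⟨Finset.disjoint_left.2 fun x hx hy => ?_, fun x hx => ?_, fun x hx => ?_⟩
  · have := H x (by simp [hx])
    have := count_pos g hx
    have := count_pos h hy
    omega
  · have := H x (by simp [hx])
    have := count_pos g hx
    omega
  · have := H x (by simp [hx])
    have := count_pos h hx
    omega

/-- Every variable of a read-once formula lies in some prime implicant. -/
theorem exists_prime {α : Type} [DecidableEq α] (f : BFormula α)
    (hro : ∀ x ∈ f.vars, f.count x = 1) :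
    ∀ x ∈ f.vars, ∃ S : Finset α, f.IsPrimeImplicant S ∧ S ⊆ f.vars ∧ x ∈ S := by
  induction f with
  | var y =>
    intro x hx
    refine ⟨{y}, ⟨fun v hv => hv y (by simp), fun T hT => ?_⟩, by simp [vars], hx⟩
    rw [Finset.ssubset_singleton_iff.1 hT]
    exact not_isImplicant_empty _
  | and g h ihg ihh =>
    obtain ⟨hd, hg, hh⟩ := readOnce_split g h hro
    intro x hx
    rcases Finset.mem_union.1 hx with hx | hx
    · obtain ⟨y, hy⟩ := vars_nonempty h
      obtain ⟨S, hS, hSv, hxS⟩ := ihg hg x hx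
      obtain ⟨T, hT, hTv, _⟩ := ihh hh y hy
      exact ⟨S ∪ T, hS.and hd hT hSv hTv, Finset.union_subset_union hSv hTv, by simp [hxS]⟩
    · obtain ⟨y, hy⟩ := vars_nonempty g
      obtain ⟨S, hS, hSv, _⟩ := ihg hg y hy
      obtain ⟨T, hT, hTv, hxT⟩ := ihh hh x hx
      exact ⟨S ∪ T, hS.and hd hT hSv hTv, Finset.union_subset_union hSv hTv, by simp [hxT]⟩
  | or g h ihg ihh =>
    obtain ⟨hd, hg, hh⟩ := readOnce_split g h hro
    intro x hx
    rcases Finset.mem_union.1 hx with hx | hx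
    · obtain ⟨S, hS, hSv, hxS⟩ := ihg hg x hx
      exact ⟨S, or_prime_aux hd hS hSv fun v => rfl,
        hSv.trans Finset.subset_union_left, hxS⟩
    · obtain ⟨S, hS, hSv, hxS⟩ := ihh hh x hx
      exact ⟨S, or_prime_aux hd.symm hS hSv fun v => Bool.or_comm _ _,
        hSv.trans Finset.subset_union_right, hxS⟩

end BFormula

/-- If `f` is a read-once monotone boolean formula whose canonical read-once tree has
root a `·`-node with children `g` and `h`, then every variable of `g` occurs together
with every variable of `h` in some prime implicant of `f`: the co-occurrence graph
contains all edges between the variable sets of distinct children. -/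
theorem stmt10 {α : Type} [DecidableEq α] (g h f : BFormula α)
    (hf : f = g.and h)
    (hro : ∀ x ∈ f.vars, f.count x = 1) :
    ∀ x ∈ g.vars, ∀ y ∈ h.vars,
      ∃ S : Finset α, f.IsPrimeImplicant S ∧ x ∈ S ∧ y ∈ S := by
  subst hf
  obtain ⟨hd, hg, hh⟩ := BFormula.readOnce_split g h hro
  intro x hx y hy
  obtain ⟨S, hS, hSv, hxS⟩ := BFormula.exists_prime g hg x hx
  obtain ⟨T, hT, hTv, hyT⟩ := BFormula.exists_prime h hh y hy
  exact ⟨S ∪ T, hS.and hd hT hSv hTv, by simp [hxS], by simp [hyT]⟩
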